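/- Let ρ > 0 and G > 0, and let x ∈ ℝⁿ be a point with h1(x) − h2(x) > ρ, ‖∇h1(x)‖ ≤ G, and ‖∇h2(x)‖ ≤ G. Then for every step size β with 0 < β ≤ min{1/L, ρ/(2G²)}, the point x⁺ = x − β·∇h1(x) satisfies H(x⁺) ≤ H(x) − (β/2)‖∇h1(x)‖². -/

import Mathlib

open Matrix RealInnerProductSpace

/-! A quadratic with symmetric Hessian lies below its tangent plane plus `(L / 2) ‖y - x‖²` as soon
as `L` bounds its eigenvalues. Along `-∇h₁(x)` this gives the usual descent of `h₁`; the inactive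
piece satisfies `h₂(x⁺) ≤ h₂(x) + 2βG² - (β/2)‖∇h₁(x)‖²`, and `2βG² ≤ ρ < h₁(x) - h₂(x)`. -/

open scoped MatrixOrder in
theorem le_algebraMap_iSup_eigenvalues {𝕜 ι : Type*} [RCLike 𝕜] [Fintype ι] [DecidableEq ι]
    {A : Matrix ι ι 𝕜} (hA : A.IsHermitian) :
    A ≤ algebraMap ℝ (Matrix ι ι 𝕜) (⨆ i, hA.eigenvalues i) := by
  refine le_algebraMap_of_spectrum_le ?_ hA
  rw [hA.spectrum_real_eq_range_eigenvalues, Set.forall_mem_range]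
  exact le_ciSup (Set.finite_range hA.eigenvalues).bddAbove

theorem re_inner_toEuclideanLin_self_le {𝕜 ι : Type*} [RCLike 𝕜] [Fintype ι] [DecidableEq ι]
    {A : Matrix ι ι 𝕜} (hA : A.IsHermitian) (v : EuclideanSpace 𝕜 ι) :
    RCLike.re (inner 𝕜 v (A.toEuclideanLin v)) ≤ (⨆ i, hA.eigenvalues i) * ‖v‖ ^ 2 := by
  set c := ⨆ i, hA.eigenvalues i
  have scalar : (algebraMap ℝ (Matrix ι ι 𝕜) c).toEuclideanLin v = (c : 𝕜) • v := by
    rw [Algebra.algebraMap_eq_smul_one, RCLike.real_smul_eq_coe_smul (K := 𝕜), map_smul]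
    simp
  have nonneg : 0 ≤ RCLike.re (inner 𝕜 v ((algebraMap ℝ _ c - A).toEuclideanLin v)) :=
    (isPositive_toEuclideanLin_iff.mpr
      (Matrix.le_iff.mp (le_algebraMap_iSup_eigenvalues hA))).re_inner_nonneg_right v
  rwa [map_sub, LinearMap.sub_apply, scalar, inner_sub_right, map_sub, inner_smul_right,
    RCLike.re_ofReal_mul, inner_self_eq_norm_sq, sub_nonneg] at nonneg

section InnerProductSpace

variable {E : Type*} [NormedAddCommGroup E] [InnerProductSpace ℝ E]

/-- The upper half of `L`-smoothness at `x`, with `f'` in the role of the gradient: `f` lies below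
the paraboloid of curvature `L` that touches it at `x` with slope `f'`. For differentiable `f` this
forces `f' = ∇f(x)`. -/
def HasQuadraticUpperBoundAt (L : ℝ) (f : E → ℝ) (f' x : E) : Prop :=
  ∀ y, f y ≤ f x + ⟪f', y - x⟫ + L / 2 * ‖y - x‖ ^ 2

/-- The quadratic function with Hessian `T` (when `T` is symmetric), linear part `a` and constant
term `r`. -/
noncomputable def quadraticFun (T : E →ₗ[ℝ] E) (a : E) (r : ℝ) (x : E) : ℝ :=
  (1 / 2) * ⟪x, T x⟫ + ⟪a, x⟫ + r

theorem quadraticFun_eq_taylor {T : E →ₗ[ℝ] E} (hT : T.IsSymmetric) (a : E) (r : ℝ) (x y : E) :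
    quadraticFun T a r y =
      quadraticFun T a r x + ⟪T x + a, y - x⟫ + (1 / 2) * ⟪y - x, T (y - x)⟫ := by
  have symm : ⟪x, T y⟫ = ⟪T x, y⟫ := (hT x y).symm
  simp only [quadraticFun, map_sub, inner_add_left, inner_sub_left, inner_sub_right, symm,
    real_inner_comm (T x)]
  ring

theorem hasQuadraticUpperBoundAt_quadraticFun {T : E →ₗ[ℝ] E} (hT : T.IsSymmetric) {L : ℝ}
    (hL : ∀ v, ⟪v, T v⟫ ≤ L * ‖v‖ ^ 2) (a : E) (r : ℝ) (x : E) :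
    HasQuadraticUpperBoundAt L (quadraticFun T a r) (T x + a) x := fun y ↦ by
  rw [quadraticFun_eq_taylor hT a r x y]
  linarith [hL (y - x)]

namespace HasQuadraticUpperBoundAt

variable {L β G : ℝ} {f : E → ℝ} {f' x : E}

theorem mono {L' : ℝ} (hf : HasQuadraticUpperBoundAt L f f' x) (hL : L ≤ L') :
    HasQuadraticUpperBoundAt L' f f' x := fun y ↦
  (hf y).trans <| by gcongr

theorem le_of_step (hf : HasQuadraticUpperBoundAt L f f' x) (hβ : 0 ≤ β) (hβL : β * L ≤ 1)
    (v : E) : f (x - β • v) ≤ f x - β * ⟪f', v⟫ + β / 2 * ‖v‖ ^ 2 := by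
  have upper : f (x - β • v) ≤ f x - β * ⟪f', v⟫ + β * L * (β / 2 * ‖v‖ ^ 2) := by
    convert hf (x - β • v) using 1
    rw [sub_sub_cancel_left, inner_neg_right, real_inner_smul_right, norm_neg, norm_smul, mul_pow,
      Real.norm_eq_abs, sq_abs]
    ring
  have curvature : β * L * (β / 2 * ‖v‖ ^ 2) ≤ β / 2 * ‖v‖ ^ 2 :=
    mul_le_of_le_one_left (by positivity) hβL
  linarith

theorem le_of_gradient_step (hf : HasQuadraticUpperBoundAt L f f' x) (hβ : 0 ≤ β)
    (hβL : β * L ≤ 1) : f (x - β • f') ≤ f x - β / 2 * ‖f'‖ ^ 2 := by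
  have step := hf.le_of_step hβ hβL f'
  rw [real_inner_self_eq_norm_sq] at step
  linarith

theorem le_of_step_of_norm_le (hf : HasQuadraticUpperBoundAt L f f' x) (hβ : 0 ≤ β)
    (hβL : β * L ≤ 1) {v : E} (hf' : ‖f'‖ ≤ G) (hv : ‖v‖ ≤ G) :
    f (x - β • v) ≤ f x + 2 * β * G ^ 2 - β / 2 * ‖v‖ ^ 2 := by
  have neg_inner_le : -⟪f', v⟫ ≤ G ^ 2 := calc
    -⟪f', v⟫ ≤ ‖f'‖ * ‖v‖ := (neg_le_abs _).trans (abs_real_inner_le_norm f' v)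
    _ ≤ G * G := by gcongr; exact (norm_nonneg v).trans hv
    _ = G ^ 2 := (sq G).symm
  have norm_sq_le : ‖v‖ ^ 2 ≤ G ^ 2 := by gcongr
  calc f (x - β • v) ≤ f x - β * ⟪f', v⟫ + β / 2 * ‖v‖ ^ 2 := hf.le_of_step hβ hβL v
    _ = f x + β * (-⟪f', v⟫ + ‖v‖ ^ 2) - β / 2 * ‖v‖ ^ 2 := by ring
    _ ≤ f x + β * (G ^ 2 + G ^ 2) - β / 2 * ‖v‖ ^ 2 := by gcongr
    _ = f x + 2 * β * G ^ 2 - β / 2 * ‖v‖ ^ 2 := by ring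

end HasQuadraticUpperBoundAt

theorem descent_smooth_region_general {h₁ h₂ : E → ℝ} {g₁ g₂ x : E} {L ρ G β : ℝ}
    (hh₁ : HasQuadraticUpperBoundAt L h₁ g₁ x) (hh₂ : HasQuadraticUpperBoundAt L h₂ g₂ x)
    (hgap : h₂ x + ρ ≤ h₁ x) (hg₁ : ‖g₁‖ ≤ G) (hg₂ : ‖g₂‖ ≤ G)
    (hβ : 0 ≤ β) (hβL : β * L ≤ 1) (hβG : β * (2 * G ^ 2) ≤ ρ) :
    max (h₁ (x - β • g₁)) (h₂ (x - β • g₁)) ≤ max (h₁ x) (h₂ x) - β / 2 * ‖g₁‖ ^ 2 := by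
  have active : h₁ (x - β • g₁) ≤ h₁ x - β / 2 * ‖g₁‖ ^ 2 := hh₁.le_of_gradient_step hβ hβL
  have inactive : h₂ (x - β • g₁) ≤ h₁ x - β / 2 * ‖g₁‖ ^ 2 := by
    linarith [hh₂.le_of_step_of_norm_le hβ hβL hg₂ hg₁]
  exact (max_le active inactive).trans (sub_le_sub_right (le_max_left _ _) _)

end InnerProductSpace

theorem hasQuadraticUpperBoundAt_toEuclideanLin {ι : Type*} [Fintype ι] [DecidableEq ι]
    {A : Matrix ι ι ℝ} (hA : A.IsHermitian) (a : EuclideanSpace ℝ ι) (r : ℝ)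
    (x : EuclideanSpace ℝ ι) :
    HasQuadraticUpperBoundAt (⨆ i, hA.eigenvalues i) (quadraticFun A.toEuclideanLin a r)
      (A.toEuclideanLin x + a) x :=
  hasQuadraticUpperBoundAt_quadraticFun (isSymmetric_toEuclideanLin_iff.mpr hA)
    (re_inner_toEuclideanLin_self_le hA) a r x

/-- Descent of `H = max{h1, h2}` along `-∇h1(x)` at a point where `h1(x) - h2(x) > ρ`
and both gradients are bounded by `G`: for every step size
`0 < β ≤ min{1/L, ρ/(2G²)}`, the point `x⁺ = x - β ∇h1(x)` satisfies
`H(x⁺) ≤ H(x) - (β/2)‖∇h1(x)‖²`. -/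
theorem descent_smooth_region
    (n : ℕ) [NeZero n] (A1 A2 : Matrix (Fin n) (Fin n) ℝ)
    (hA1s : A1.IsSymm) (hA2s : A2.IsSymm)
    (hA1 : A1.PosSemidef) (hA2 : A2.PosSemidef)
    (a1 a2 : EuclideanSpace ℝ (Fin n)) (r1 r2 : ℝ)
    (h1 h2 H : EuclideanSpace ℝ (Fin n) → ℝ)
    (hh1 : ∀ x, h1 x = (1 / 2) * ⟪x, A1.toEuclideanLin x⟫ + ⟪a1, x⟫ + r1)
    (hh2 : ∀ x, h2 x = (1 / 2) * ⟪x, A2.toEuclideanLin x⟫ + ⟪a2, x⟫ + r2)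
    (hH : ∀ x, H x = max (h1 x) (h2 x))
    (L : ℝ)
    (hL : L = max (⨆ i, hA1.1.eigenvalues i) (⨆ i, hA2.1.eigenvalues i))
    (hLpos : 0 < L)
    (ρ G : ℝ) (hρ : 0 < ρ) (hG : 0 < G)
    (x : EuclideanSpace ℝ (Fin n))
    (g1 g2 : EuclideanSpace ℝ (Fin n))
    (hg1 : g1 = A1.toEuclideanLin x + a1)
    (hg2 : g2 = A2.toEuclideanLin x + a2)
    (hgap : h2 x + ρ < h1 x)
    (hG1 : ‖g1‖ ≤ G) (hG2 : ‖g2‖ ≤ G) :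
    ∀ β : ℝ, 0 < β → β ≤ min (1 / L) (ρ / (2 * G ^ 2)) →
      H (x - β • g1) ≤ H x - (β / 2) * ‖g1‖ ^ 2 := by
  obtain rfl : h1 = quadraticFun A1.toEuclideanLin a1 r1 := funext hh1
  obtain rfl : h2 = quadraticFun A2.toEuclideanLin a2 r2 := funext hh2
  subst hg1 hg2
  intro β hβ hle
  obtain ⟨hβL, hβG⟩ := le_min_iff.mp hle
  rw [hH, hH]
  exact descent_smooth_region_general
    ((hasQuadraticUpperBoundAt_toEuclideanLin hA1.1 a1 r1 x).mono (hL ▸ le_max_left _ _))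
    ((hasQuadraticUpperBoundAt_toEuclideanLin hA2.1 a2 r2 x).mono (hL ▸ le_max_right _ _))
    hgap.le hG1 hG2 hβ.le ((le_div_iff₀ hLpos).mp hβL) ((le_div_iff₀ (by positivity)).mp hβG)
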